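/- Let {x^k}, {y^k}, {z^k} be generated by the multiobjective MFISTA algorithm, and define σ_k(z) := min_{i=1,…,m} ( F_i(x^k) − F_i(z) ). Then for all z ∈ ℝ^n and all k ≥ 0: −σ_{k+1}(z) ≥ (ℓ/2)( ‖z^{k+1}‖² − ‖y^{k+1}‖² − 2⟨z^{k+1} − y^{k+1}, z⟩ ) + ((ℓ − L)/2)‖z^{k+1} − y^{k+1}‖². -/

import Mathlib

open scoped RealInnerProductSpace

noncomputable abbrev E (n : ℕ) := EuclideanSpace ℝ (Fin n)

/-! With `δ = max_i (F_i(z^{k+1}) - F_i(x^k))`, the acceptance test gives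
`F_i(x^{k+1}) ≤ F_i(x^k) + δ` for every `i`, whichever branch is taken, so that
`-σ_{k+1}(w) ≥ max_i (F_i(w) - F_i(x^k)) - δ`.
Convexity bounds the first maximum below by the model minimized to obtain `z^{k+1}`, evaluated at
`w`, and the descent lemma bounds `δ` above by the model at `z^{k+1}` plus
`(L/2) ‖z^{k+1} - y^{k+1}‖²`. The regularized model is `ℓ`-strongly convex, so it exceeds its
minimum by at least `(ℓ/2) ‖w - z^{k+1}‖²`, which is the estimate after expanding squares.
-/

section NormedSpace

variable {V : Type*} [NormedAddCommGroup V] [NormedSpace ℝ V] {s : Set V} {f : V → ℝ} {b w : V}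

theorem fderiv_sub_add_le_of_convexOn {f' : V →L[ℝ] ℝ} (hf : ConvexOn ℝ s f) (hb : b ∈ s)
    (hw : w ∈ s) (hf' : HasFDerivAt f f' b) : f' (w - b) + f b ≤ f w := by
  have hline : HasDerivAt (f ∘ AffineMap.lineMap b w) (f' (w - b)) (0 : ℝ) :=
    HasFDerivAt.comp_hasDerivAt _ (by simpa using hf') AffineMap.hasDerivAt_lineMap
  have hslope := (hf.comp_affineMap (AffineMap.lineMap b w)).le_slope_of_hasDerivAt
    (by simpa using hb) (by simpa using hw) one_pos hline
  rw [slope_def_field] at hslope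
  simp only [Function.comp_apply, AffineMap.lineMap_apply_one, AffineMap.lineMap_apply_zero,
    sub_zero, div_one] at hslope
  linarith

theorem le_fderiv_sub_add_add_sq_of_lipschitz {f' : V → V →L[ℝ] ℝ} {K : ℝ} (hs : Convex ℝ s)
    (hb : b ∈ s) (hw : w ∈ s) (hf : ∀ x ∈ s, HasFDerivAt f (f' x) x)
    (hlip : ∀ x ∈ s, ‖f' x - f' b‖ ≤ K * ‖x - b‖) :
    f w ≤ f' b (w - b) + f b + K / 2 * ‖w - b‖ ^ 2 := by
  let γ : ℝ → V := AffineMap.lineMap b w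
  have hγ : ∀ r ∈ Set.Icc (0 : ℝ) 1, γ r ∈ s := fun r hr => hs.lineMap_mem hb hw hr
  have hline : ∀ r ∈ Set.Icc (0 : ℝ) 1, HasDerivAt (f ∘ γ) (f' (γ r) (w - b)) r := fun r hr =>
    (hf _ (hγ r hr)).comp_hasDerivAt r AffineMap.hasDerivAt_lineMap
  have hquad : ∀ r : ℝ, HasDerivAt
      (fun r => f b + r * f' b (w - b) + r ^ 2 * (K / 2 * ‖w - b‖ ^ 2))
      (f' b (w - b) + r * (K * ‖w - b‖ ^ 2)) r := fun r => by
    refine ((((hasDerivAt_id r).mul_const _).const_add _).add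
      ((hasDerivAt_pow 2 r).mul_const _)).congr_deriv ?_
    simp only [Nat.cast_ofNat, pow_one, Nat.add_one_sub_one]
    ring
  have hderiv : ∀ r ∈ Set.Ico (0 : ℝ) 1,
      f' (γ r) (w - b) ≤ f' b (w - b) + r * (K * ‖w - b‖ ^ 2) := fun r hr => by
    have hdist : ‖γ r - b‖ = r * ‖w - b‖ := by
      simp [γ, AffineMap.lineMap_apply, norm_smul, abs_of_nonneg hr.1]
    rw [← sub_le_iff_le_add']
    calc f' (γ r) (w - b) - f' b (w - b)
        ≤ ‖(f' (γ r) - f' b) (w - b)‖ := le_abs_self _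
      _ ≤ ‖f' (γ r) - f' b‖ * ‖w - b‖ := ContinuousLinearMap.le_opNorm _ _
      _ ≤ K * ‖γ r - b‖ * ‖w - b‖ := by gcongr; exact hlip _ (hγ r (Set.Ico_subset_Icc_self hr))
      _ = r * (K * ‖w - b‖ ^ 2) := by rw [hdist]; ring
  have hbound := image_le_of_deriv_right_le_deriv_boundary
    (fun r hr => (hline r hr).continuousAt.continuousWithinAt)
    (fun r hr => (hline r (Set.Ico_subset_Icc_self hr)).hasDerivWithinAt)
    (by simp [γ]) (fun r _ => (hquad r).continuousAt.continuousWithinAt)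
    (fun r _ => (hquad r).hasDerivWithinAt) hderiv (Set.right_mem_Icc.2 zero_le_one)
  simp only [γ, Function.comp_apply, AffineMap.lineMap_apply_one, one_mul, one_pow] at hbound
  linarith

theorem add_modulus_le_of_uniformConvexOn_of_isMinOn {φ : ℝ → ℝ} {z : V}
    (hf : UniformConvexOn s φ f) (hmin : IsMinOn f s z) (hz : z ∈ s) (hw : w ∈ s) :
    f z + φ ‖w - z‖ ≤ f w := by
  have hstep : ∀ r ∈ Set.Ioo (0 : ℝ) 1, f z + (1 - r) * φ ‖w - z‖ ≤ f w := fun r hr => by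
    have hr' : 0 ≤ 1 - r := sub_nonneg.2 hr.2.le
    have hsum : r + (1 - r) = 1 := by ring
    have hmin_r := isMinOn_iff.1 hmin _ (hf.1 hw hz hr.1.le hr' hsum)
    have hconv_r := hf.2 hw hz hr.1.le hr' hsum
    simp only [smul_eq_mul] at hconv_r
    refine le_of_mul_le_mul_left ?_ hr.1
    linarith
  have hlim : Filter.Tendsto (fun r : ℝ => f z + (1 - r) * φ ‖w - z‖)
      (nhdsWithin 0 (Set.Ioi 0)) (nhds (f z + φ ‖w - z‖)) := by
    refine (Continuous.tendsto' ?_ 0 _ (by simp)).mono_left nhdsWithin_le_nhds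
    fun_prop
  exact le_of_tendsto hlim (Filter.mem_of_superset (Ioo_mem_nhdsGT one_pos) hstep)

end NormedSpace

theorem convexOn_ciSup {ι V : Type*} [Nonempty ι] [AddCommMonoid V] [Module ℝ V]
    {s : Set V} {f : ι → V → ℝ} (hf : ∀ i, ConvexOn ℝ s (f i))
    (hbdd : ∀ x ∈ s, BddAbove (Set.range fun i => f i x)) :
    ConvexOn ℝ s fun x => ⨆ i, f i x := by
  refine ⟨(hf (Classical.arbitrary ι)).1, fun x hx y hy α β hα hβ hαβ => ciSup_le fun i => ?_⟩
  calc f i (α • x + β • y) ≤ α • f i x + β • f i y := (hf i).2 hx hy hα hβ hαβ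
    _ ≤ α • (⨆ i, f i x) + β • ⨆ i, f i y := by
      gcongr
      exacts [le_ciSup (hbdd x hx) i, le_ciSup (hbdd y hy) i]

theorem le_add_ciSup_of_monotone_update {ι X : Type*} [Finite ι] {F : ι → X → ℝ}
    {a z x : X} (haccept : 0 ≤ (⨆ i, (F i a - F i z)) → x = z)
    (hreject : ¬ 0 ≤ (⨆ i, (F i a - F i z)) → x = a) (i : ι) :
    F i x ≤ F i a + ⨆ j, (F j z - F j a) := by
  have hz := Finite.le_ciSup (fun j => F j z - F j a) i
  by_cases h : 0 ≤ ⨆ j, (F j a - F j z)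
  · rw [haccept h]
    linarith
  · rw [hreject h]
    linarith [Finite.le_ciSup (fun j => F j a - F j z) i]

theorem ciSup_sub_sub_le_neg_ciInf_sub {ι : Type*} [Finite ι] [Nonempty ι] {p q r : ι → ℝ} {δ : ℝ}
    (h : ∀ i, r i ≤ p i + δ) : (⨆ i, (q i - p i)) - δ ≤ -⨅ i, (r i - q i) := by
  refine sub_le_iff_le_add.2 (ciSup_le fun i => ?_)
  linarith [h i, Finite.ciInf_le (fun i => r i - q i) i]

section InnerProductSpace

variable {H : Type*} [NormedAddCommGroup H] [InnerProductSpace ℝ H]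

theorem strongConvexOn_add_sq_norm_sub {s : Set H} {φ : H → ℝ} (hφ : ConvexOn ℝ s φ) (m : ℝ)
    (b : H) : StrongConvexOn s m fun x => φ x + m / 2 * ‖x - b‖ ^ 2 := by
  have haffine : ConvexOn ℝ s fun x => m / 2 * ‖b‖ ^ 2 + ⟪-(m • b), x⟫ :=
    (convexOn_const _ hφ.1).add ((innerₛₗ ℝ (-(m • b))).convexOn hφ.1)
  refine strongConvexOn_iff_convex.2 ((hφ.add haffine).congr fun x _ => ?_)
  simp only [Pi.add_apply, norm_sub_sq_real, inner_neg_left, real_inner_smul_left,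
    real_inner_comm b x]
  ring

theorem prox_three_point {s : Set H} {φ : H → ℝ} (hφ : ConvexOn ℝ s φ) {ℓ : ℝ} {b z w : H}
    (hmin : IsMinOn (fun x => φ x + ℓ / 2 * ‖x - b‖ ^ 2) s z) (hz : z ∈ s) (hw : w ∈ s) :
    φ z + ℓ / 2 * ‖z - b‖ ^ 2 + ℓ / 2 * ‖w - z‖ ^ 2 ≤ φ w + ℓ / 2 * ‖w - b‖ ^ 2 :=
  add_modulus_le_of_uniformConvexOn_of_isMinOn (strongConvexOn_add_sq_norm_sub hφ ℓ b) hmin hz hw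

theorem sq_norm_sub_sub_sq_norm_sub (b z w : H) :
    ‖w - z‖ ^ 2 - ‖w - b‖ ^ 2 = ‖z‖ ^ 2 - ‖b‖ ^ 2 - 2 * ⟪z - b, w⟫ := by
  rw [norm_sub_sq_real, norm_sub_sq_real, inner_sub_left, real_inner_comm z, real_inner_comm b]
  ring

variable [CompleteSpace H]

/-- The model of `f + g` around `b` that linearizes the smooth part `f` and keeps `g`. -/
noncomputable def partialLinearization (f g : H → ℝ) (b w : H) : ℝ :=
  ⟪gradient f b, w - b⟫ + g w + f b

theorem convexOn_partialLinearization (f : H → ℝ) {g : H → ℝ} {s : Set H}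
    (hg : ConvexOn ℝ s g) (b : H) : ConvexOn ℝ s (partialLinearization f g b) := by
  have hlin := (innerₛₗ ℝ (gradient f b)).convexOn hg.1
  refine ((hlin.add hg).add_const (f b - ⟪gradient f b, b⟫)).congr fun w _ => ?_
  simp only [partialLinearization, Pi.add_apply, innerₛₗ_apply_apply, inner_sub_right]
  ring

theorem partialLinearization_le {f : H → ℝ} {s : Set H} {b w : H} (hf : ConvexOn ℝ s f)
    (hb : b ∈ s) (hw : w ∈ s) (hfd : DifferentiableAt ℝ f b) (g : H → ℝ) :
    partialLinearization f g b w ≤ f w + g w := by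
  have := fderiv_sub_add_le_of_convexOn hf hb hw hfd.hasFDerivAt
  rw [partialLinearization, inner_gradient_left]
  linarith

theorem le_partialLinearization_add_sq {f : H → ℝ} {K : ℝ} {b : H} (hfd : Differentiable ℝ f)
    (hlip : ∀ x, ‖gradient f x - gradient f b‖ ≤ K * ‖x - b‖) (g : H → ℝ) (w : H) :
    f w + g w ≤ partialLinearization f g b w + K / 2 * ‖w - b‖ ^ 2 := by
  have hlip' : ∀ x, ‖fderiv ℝ f x - fderiv ℝ f b‖ ≤ K * ‖x - b‖ := fun x => by
    rw [← toDual_gradient, ← toDual_gradient, ← map_sub, LinearIsometryEquiv.norm_map]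
    exact hlip x
  have := le_fderiv_sub_add_add_sq_of_lipschitz convex_univ (Set.mem_univ b) (Set.mem_univ w)
    (fun x _ => (hfd x).hasFDerivAt) (fun x _ => hlip' x)
  rw [partialLinearization, inner_gradient_left]
  linarith

variable {ι : Type*}

/-- The unregularized objective of the subproblem defining `d_ℓ(x, b)`; the values `F_i(x)`, on
which it depends only through a shift of each component, are passed as the vector `c`. -/
noncomputable def maxModel (f g : ι → H → ℝ) (c : ι → ℝ) (b w : H) : ℝ :=
  ⨆ i, (partialLinearization (f i) (g i) b w - c i)

variable [Finite ι]

theorem maxModel_le_ciSup {f : ι → H → ℝ} {s : Set H} {b w : H}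
    (hf : ∀ i, ConvexOn ℝ s (f i)) (hb : b ∈ s) (hw : w ∈ s)
    (hfd : ∀ i, DifferentiableAt ℝ (f i) b) (g : ι → H → ℝ) (c : ι → ℝ) :
    maxModel f g c b w ≤ ⨆ i, (f i w + g i w - c i) := by
  refine ciSup_mono (Set.finite_range _).bddAbove fun i => ?_
  gcongr
  exact partialLinearization_le (hf i) hb hw (hfd i) (g i)

variable [Nonempty ι]

theorem convexOn_maxModel (f : ι → H → ℝ) {g : ι → H → ℝ} {s : Set H}
    (hg : ∀ i, ConvexOn ℝ s (g i)) (c : ι → ℝ) (b : H) : ConvexOn ℝ s (maxModel f g c b) :=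
  convexOn_ciSup (fun i => (convexOn_partialLinearization (f i) (hg i) b).add_const (-c i))
    fun _ _ => (Set.finite_range _).bddAbove

theorem ciSup_le_maxModel_add_sq {f : ι → H → ℝ} {K : ℝ} {b : H}
    (hfd : ∀ i, Differentiable ℝ (f i))
    (hlip : ∀ i x, ‖gradient (f i) x - gradient (f i) b‖ ≤ K * ‖x - b‖)
    (g : ι → H → ℝ) (c : ι → ℝ) (w : H) :
    ⨆ i, (f i w + g i w - c i) ≤ maxModel f g c b w + K / 2 * ‖w - b‖ ^ 2 := by
  refine ciSup_le fun i => ?_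
  have hmodel := le_partialLinearization_add_sq (hfd i) (hlip i) (g i) w
  have hmax : partialLinearization (f i) (g i) b w - c i ≤ maxModel f g c b w :=
    Finite.le_ciSup (fun i => partialLinearization (f i) (g i) b w - c i) i
  linarith

/-- One step from the current iterate `a` and an arbitrary extrapolation point `b` to the trial
point `z` and the next iterate `x`. -/
theorem stmt_7_general {f g F : ι → H → ℝ} {K ℓ : ℝ} {a b z x : H}
    (hfc : ∀ i, ConvexOn ℝ Set.univ (f i)) (hfd : ∀ i, Differentiable ℝ (f i))
    (hlip : ∀ i x, ‖gradient (f i) x - gradient (f i) b‖ ≤ K * ‖x - b‖)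
    (hgc : ∀ i, ConvexOn ℝ Set.univ (g i)) (hF : ∀ i w, F i w = f i w + g i w)
    (hz : ∀ w, maxModel f g (F · a) b z + ℓ / 2 * ‖z - b‖ ^ 2 ≤
      maxModel f g (F · a) b w + ℓ / 2 * ‖w - b‖ ^ 2)
    (haccept : 0 ≤ (⨆ i, (F i a - F i z)) → x = z)
    (hreject : ¬ 0 ≤ (⨆ i, (F i a - F i z)) → x = a) (w : H) :
    -(⨅ i, (F i x - F i w)) ≥
      ℓ / 2 * (‖z‖ ^ 2 - ‖b‖ ^ 2 - 2 * ⟪z - b, w⟫) + (ℓ - K) / 2 * ‖z - b‖ ^ 2 := by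
  have hsplit : (⨆ i, (F i w - F i a)) - (⨆ i, (F i z - F i a)) ≤ -⨅ i, (F i x - F i w) :=
    ciSup_sub_sub_le_neg_ciInf_sub (le_add_ciSup_of_monotone_update haccept hreject)
  have hlower : maxModel f g (F · a) b w ≤ ⨆ i, (F i w - F i a) := by
    simpa only [hF] using maxModel_le_ciSup hfc (Set.mem_univ b) (Set.mem_univ w)
      (fun i => hfd i b) g (F · a)
  have hupper : ⨆ i, (F i z - F i a) ≤ maxModel f g (F · a) b z + K / 2 * ‖z - b‖ ^ 2 := by
    simpa only [hF] using ciSup_le_maxModel_add_sq hfd hlip g (F · a) z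
  have hprox := prox_three_point (convexOn_maxModel f hgc (F · a) b)
    (isMinOn_univ_iff.2 hz) (Set.mem_univ z) (Set.mem_univ w)
  rw [← sq_norm_sub_sub_sq_norm_sub]
  linarith

end InnerProductSpace

theorem stmt_7
    (n m : ℕ) (hn : 1 ≤ n) (hm : 1 ≤ m)
    (f g F : Fin m → E n → ℝ)
    (L : Fin m → ℝ) (hL : ∀ i, 0 < L i)
    (hfc : ∀ i, ConvexOn ℝ Set.univ (f i))
    (hfd : ∀ i, ContDiff ℝ 1 (f i))
    (hflip : ∀ i a b, ‖gradient (f i) a - gradient (f i) b‖ ≤ L i * ‖a - b‖)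
    (hgc : ∀ i, ConvexOn ℝ Set.univ (g i))
    (hF : ∀ i w, F i w = f i w + g i w)
    (ℓ : ℝ) (hℓ : 0 < ℓ) (hℓL : ∀ i, L i ≤ ℓ)
    (d : E n → E n → E n)
    (hd : ∀ a b w,
      (⨆ i, (⟪gradient (f i) b, d a b - b⟫ + g i (d a b) + f i b - F i a)) +
          ℓ / 2 * ‖d a b - b‖ ^ 2 ≤
        (⨆ i, (⟪gradient (f i) b, w - b⟫ + g i w + f i b - F i a)) +
          ℓ / 2 * ‖w - b‖ ^ 2)
    (x y z : ℕ → E n) (t : ℕ → ℝ)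
    (hy1 : y 1 = x 0) (ht1 : t 1 = 1)
    (ht : ∀ k, 1 ≤ k → t (k + 1) = (1 + Real.sqrt (1 + 4 * t k ^ 2)) / 2)
    (hz : ∀ k, 1 ≤ k → z k = d (x (k - 1)) (y k))
    (hxpos : ∀ k, 1 ≤ k → 0 ≤ (⨆ i, (F i (x (k - 1)) - F i (z k))) → x k = z k)
    (hxneg : ∀ k, 1 ≤ k → ¬ 0 ≤ (⨆ i, (F i (x (k - 1)) - F i (z k))) → x k = x (k - 1))
    (hy : ∀ k, 1 ≤ k →
      y (k + 1) = x k + (t k / t (k + 1)) • (z k - x k) +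
        ((t k - 1) / t (k + 1)) • (x k - x (k - 1))) :
    ∀ (w : E n) (k : ℕ),
      -(⨅ i, (F i (x (k + 1)) - F i w)) ≥
        ℓ / 2 * (‖z (k + 1)‖ ^ 2 - ‖y (k + 1)‖ ^ 2 -
            2 * ⟪z (k + 1) - y (k + 1), w⟫) +
          (ℓ - ⨆ i, L i) / 2 * ‖z (k + 1) - y (k + 1)‖ ^ 2 := by
  intro w k
  have : Nonempty (Fin m) := ⟨⟨0, hm⟩⟩
  have hlip : ∀ i a b, ‖gradient (f i) a - gradient (f i) b‖ ≤ (⨆ i, L i) * ‖a - b‖ :=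
    fun i a b => (hflip i a b).trans (by gcongr; exact Finite.le_ciSup L i)
  have hmin := hz (k + 1) k.succ_pos ▸ hd (x k) (y (k + 1))
  exact stmt_7_general hfc (fun i => (hfd i).differentiable one_ne_zero) (fun i a => hlip i a _)
    hgc hF hmin (hxpos (k + 1) k.succ_pos) (hxneg (k + 1) k.succ_pos) w
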